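/- arXiv:1911.06920 — 5 statements merged into one kernel-verified Lean document; each statement's English description precedes it below -/
import Mathlib

section
/- (PL case, geometrically decaying variance: linear convergence.) Consider a TRish process for f with constant parameters (α_k, γ_{1,k}, γ_{2,k}) = (α, γ1, γ2) for all k, where γ1 ≥ γ2 > 0. Suppose f satisfies the Polyak–Łojasiewicz condition with constant c > 0; there exist M_g, M_H > 0 and ζ ∈ (0,1) such that for all k, E[‖∇f(x_k) − g_k‖² | ℱ_k] ≤ M_g·ζ^{k−1} and ‖H_k‖ ≤ M_H almost surely; 0 < α ≤ γ2/(4γ1²(L_g + M_H)); and 2c·κ1·α ≤ 1 where κ1 := γ2/8. Then, with κ2 := (γ1²/γ2 − γ2/8)·M_g, ω := max{f(x_1) − f_inf, κ2/(c·κ1)}, and ρ := max{1 − c·κ1·α, ζ}, for every k ≥ 1: E[f(x_k)] − f_inf ≤ ω·ρ^{k−1}. -/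
/-!
The argument is a one-step expected-decrease estimate followed by a scalar recurrence.

Write `G` for the true gradient at the current iterate. The radius always lies between
`γ2 * α * ‖g‖` and `γ1 * α * ‖g‖` (`radius_bounds`), so `t = γ2 * α` is admissible in the Cauchy
decrease condition, while the step obeys `‖s‖ ≤ γ1 * α * ‖g‖`. Together with the descent lemma for
functions with Lipschitz gradient (`descent`) and the bound on `α`, this yields the pathwise
inequality (`pathwise_decrease`)
`f (x + s) ≤ f x + α * (γ1 ^ 2 / γ2 * ‖G - g‖ ^ 2 - γ2 / 8 * ‖g‖ ^ 2)`.
The error term `⟪G - g, s⟫` is not of mean zero, since `s` depends on `g`; it is controlled by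
Young's inequality at the price of the variance term.

Taking expectations, unbiasedness gives `E‖g‖² = E‖G‖² + E‖G - g‖²` (`integral_sq_decomp`), so the
gap `e k = E[f (x k)] - f_inf` satisfies, by the Polyak–Łojasiewicz inequality,
`e (k + 1) ≤ (1 - 2 * c * κ₁ * α) * e k + α * κ₂ * ζ ^ (k - 1)`.
Half of the contraction absorbs the noise because `κ₂ ≤ c * κ₁ * ω`, and induction
(`geometric_recurrence`) gives the rate.
-/

open MeasureTheory RealInnerProductSpace Filter

noncomputable section

/-- A step `s` achieves Cauchy decrease for `(g, H, Δ)`. -/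
def CauchyDecrease {n : ℕ} (g : EuclideanSpace ℝ (Fin n))
    (H : EuclideanSpace ℝ (Fin n) →L[ℝ] EuclideanSpace ℝ (Fin n))
    (Δ : ℝ) (s : EuclideanSpace ℝ (Fin n)) : Prop :=
  ‖s‖ ≤ Δ ∧ ∀ t : ℝ, 0 ≤ t → t * ‖g‖ ≤ Δ →
    ⟪g, s⟫ + (1/2) * ⟪s, H s⟫ ≤ -(t * ‖g‖^2) + (1/2) * t^2 * ⟪g, H g⟫

/-- The TRish trust-region radius `Δ(α, γ1, γ2, g)`. -/
def radius {n : ℕ} (α γ1 γ2 : ℝ) (g : EuclideanSpace ℝ (Fin n)) : ℝ :=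
  if ‖g‖ < 1/γ1 then γ1 * α * ‖g‖
  else if ‖g‖ ≤ 1/γ2 then α
  else γ2 * α * ‖g‖

/-- The descent lemma: an `L`-Lipschitz gradient gives a quadratic upper bound. -/
lemma descent {E : Type*} [NormedAddCommGroup E] [InnerProductSpace ℝ E] [CompleteSpace E]
    {f : E → ℝ} {L : ℝ} (hf : Differentiable ℝ f)
    (hlip : ∀ y z, ‖gradient f y - gradient f z‖ ≤ L * ‖y - z‖) (x s : E) :
    f (x + s) ≤ f x + ⟪gradient f x, s⟫ + L / 2 * ‖s‖ ^ 2 := by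
  have hd : ∀ t : ℝ, HasDerivAt (fun t : ℝ => f (x + t • s)) ⟪gradient f (x + t • s), s⟫ t := by
    intro t
    have h1 : HasDerivAt (fun t : ℝ => x + t • s) s t := by
      simpa using ((hasDerivAt_id t).smul_const s).const_add x
    have h2 := (hf (x + t • s)).hasGradientAt.hasFDerivAt
    exact (h2.comp_hasDerivAt t h1).congr_deriv (by simp)
  have hB : ∀ t : ℝ, HasDerivAt
      (fun t : ℝ => f x + t * ⟪gradient f x, s⟫ + L / 2 * ‖s‖ ^ 2 * t ^ 2)
      (⟪gradient f x, s⟫ + L * ‖s‖ ^ 2 * t) t := by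
    intro t
    have h1 := ((hasDerivAt_id t).mul_const ⟪gradient f x, s⟫).const_add (f x)
    have h2 := ((hasDerivAt_id t).pow 2).const_mul (L / 2 * ‖s‖ ^ 2)
    refine (h1.add h2).congr_deriv ?_
    simp
    ring
  have key := image_le_of_deriv_right_le_deriv_boundary (a := 0) (b := 1)
    (fun t _ => (hd t).continuousAt.continuousWithinAt)
    (fun t _ => (hd t).hasDerivWithinAt) (by simp)
    (fun t _ => (hB t).continuousAt.continuousWithinAt)
    (fun t _ => (hB t).hasDerivWithinAt) (fun t ht => ?_)
    (Set.right_mem_Icc.2 (zero_le_one' ℝ))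
  · simpa using key
  · have h1 : ⟪gradient f (x + t • s) - gradient f x, s⟫ ≤ (L * ‖t • s‖) * ‖s‖ := by
      refine (real_inner_le_norm _ _).trans ?_
      gcongr
      simpa using hlip (x + t • s) x
    rw [inner_sub_left, norm_smul, Real.norm_of_nonneg ht.1] at h1
    linarith

lemma radius_bounds {n : ℕ} {α γ1 γ2 : ℝ} (hα : 0 < α) (hγ2 : 0 < γ2) (hγ12 : γ2 ≤ γ1)
    (g : EuclideanSpace ℝ (Fin n)) :
    γ2 * α * ‖g‖ ≤ radius α γ1 γ2 g ∧ radius α γ1 γ2 g ≤ γ1 * α * ‖g‖ := by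
  have hγ1 : 0 < γ1 := hγ2.trans_le hγ12
  have h0 : γ2 * α * ‖g‖ ≤ γ1 * α * ‖g‖ := by gcongr
  unfold radius
  split_ifs with h1 h2
  · exact ⟨h0, le_rfl⟩
  · rw [not_lt, div_le_iff₀ hγ1] at h1
    rw [le_div_iff₀ hγ2] at h2
    constructor <;> nlinarith
  · exact ⟨le_rfl, h0⟩

/-- The decrease of `f` along one step, before expectations are taken. -/
lemma pathwise_decrease {n : ℕ} {f : EuclideanSpace ℝ (Fin n) → ℝ} {L M α γ1 γ2 : ℝ}
    (hL : 0 < L) (hM : 0 < M) (hf : Differentiable ℝ f)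
    (hlip : ∀ y z, ‖gradient f y - gradient f z‖ ≤ L * ‖y - z‖)
    (hγ2 : 0 < γ2) (hγ12 : γ2 ≤ γ1) (hα : 0 < α) (hα1 : α ≤ γ2 / (4 * γ1 ^ 2 * (L + M)))
    {x g s : EuclideanSpace ℝ (Fin n)}
    {H : EuclideanSpace ℝ (Fin n) →L[ℝ] EuclideanSpace ℝ (Fin n)} (hH : ‖H‖ ≤ M)
    (hs : CauchyDecrease g H (radius α γ1 γ2 g) s) :
    f (x + s) ≤ f x +
      α * (γ1 ^ 2 / γ2 * ‖gradient f x - g‖ ^ 2 - γ2 / 8 * ‖g‖ ^ 2) := by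
  have hγ1 : 0 < γ1 := hγ2.trans_le hγ12
  obtain ⟨hr1, hr2⟩ := radius_bounds hα hγ2 hγ12 g
  have hsn : ‖s‖ ≤ γ1 * α * ‖g‖ := hs.1.trans hr2
  have hquad : ∀ v : EuclideanSpace ℝ (Fin n), |⟪v, H v⟫| ≤ M * ‖v‖ ^ 2 := by
    intro v
    calc |⟪v, H v⟫| ≤ ‖v‖ * ‖H v‖ := abs_real_inner_le_norm _ _
      _ ≤ ‖v‖ * (M * ‖v‖) := by gcongr; exact H.le_of_opNorm_le hH v
      _ = M * ‖v‖ ^ 2 := by ring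
  have hcauchy := hs.2 (γ2 * α) (by positivity) hr1
  have hdesc := descent hf hlip x s
  have hinner : ⟪gradient f x, s⟫ = ⟪g, s⟫ + ⟪gradient f x - g, s⟫ := by
    rw [inner_sub_left]; ring
  have hHs := (abs_le.1 (hquad s)).1
  have hHg : (1 / 2) * (γ2 * α) ^ 2 * ⟪g, H g⟫ ≤ (1 / 2) * (γ1 * α) ^ 2 * (M * ‖g‖ ^ 2) := by
    calc (1 / 2) * (γ2 * α) ^ 2 * ⟪g, H g⟫ ≤ (1 / 2) * (γ2 * α) ^ 2 * (M * ‖g‖ ^ 2) := by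
          gcongr; exact (abs_le.1 (hquad g)).2
      _ ≤ _ := by gcongr
  have hs2 : ‖s‖ ^ 2 ≤ (γ1 * α) ^ 2 * ‖g‖ ^ 2 := by
    calc ‖s‖ ^ 2 ≤ (γ1 * α * ‖g‖) ^ 2 := by gcongr
      _ = _ := by ring
  have hs3 : (L + M) / 2 * ‖s‖ ^ 2 ≤ (L + M) / 2 * ((γ1 * α) ^ 2 * ‖g‖ ^ 2) := by gcongr
  have hα2 : 4 * γ1 ^ 2 * (L + M) * α ≤ γ2 := by
    rw [le_div_iff₀ (by positivity)] at hα1; linarith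
  have hα3 : (L + M) * ((γ1 * α) ^ 2 * ‖g‖ ^ 2) ≤ γ2 * α * ‖g‖ ^ 2 / 4 := by
    have := mul_le_mul_of_nonneg_right hα2 (by positivity : 0 ≤ α * ‖g‖ ^ 2 / 4)
    linarith
  have hL0 : 0 ≤ L * ((γ1 * α) ^ 2 * ‖g‖ ^ 2) := by positivity
  -- Young's inequality, with weights making the `‖g‖ ^ 2` part a quarter of the decrease
  have hyoung : ⟪gradient f x - g, s⟫ ≤
      α * (γ1 ^ 2 / γ2 * ‖gradient f x - g‖ ^ 2 + γ2 / 4 * ‖g‖ ^ 2) := by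
    calc ⟪gradient f x - g, s⟫ ≤ ‖gradient f x - g‖ * ‖s‖ := real_inner_le_norm _ _
      _ ≤ ‖gradient f x - g‖ * (γ1 * α * ‖g‖) := by gcongr
      _ ≤ _ := by
        have h : 0 ≤ α / γ2 * (γ1 * ‖gradient f x - g‖ - γ2 / 2 * ‖g‖) ^ 2 := by positivity
        have h' : α / γ2 * (γ1 * ‖gradient f x - g‖ - γ2 / 2 * ‖g‖) ^ 2 =
            α * (γ1 ^ 2 / γ2 * ‖gradient f x - g‖ ^ 2 + γ2 / 4 * ‖g‖ ^ 2)
              - ‖gradient f x - g‖ * (γ1 * α * ‖g‖) := by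
          field_simp; ring
        linarith
  have hpos : 0 ≤ γ2 * α * ‖g‖ ^ 2 := by positivity
  linarith

/-- An unbiased estimator `g` of an `m`-measurable `G` satisfies `E‖g‖² = E‖G‖² + E‖G - g‖²`. -/
lemma integral_sq_decomp {E Ω : Type*} [NormedAddCommGroup E] [InnerProductSpace ℝ E]
    [CompleteSpace E] {m m0 : MeasurableSpace Ω} {P : Measure Ω} [IsProbabilityMeasure P]
    (hm : m ≤ m0) {G g : Ω → E} (hG : StronglyMeasurable[m] G) (hg : Integrable g P)
    (hG2 : Integrable (fun ω => ‖G ω‖ ^ 2) P) (hg2 : Integrable (fun ω => ‖g ω‖ ^ 2) P)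
    (hunb : P[g|m] =ᵐ[P] G) :
    Integrable (fun ω => ‖G ω - g ω‖ ^ 2) P ∧
      ∫ ω, ‖g ω‖ ^ 2 ∂P = ∫ ω, ‖G ω‖ ^ 2 ∂P + ∫ ω, ‖G ω - g ω‖ ^ 2 ∂P := by
  have hGm : AEStronglyMeasurable G P := (hG.mono hm).aestronglyMeasurable
  have hin : Integrable (fun ω => ⟪G ω, g ω⟫) P := by
    refine (hG2.add hg2).mono' (hGm.inner hg.1) (Eventually.of_forall fun ω => ?_)
    have h := abs_real_inner_le_norm (G ω) (g ω)
    simp only [Real.norm_eq_abs, Pi.add_apply]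
    nlinarith [sq_nonneg (‖G ω‖ - ‖g ω‖), sq_nonneg ‖G ω‖, sq_nonneg ‖g ω‖]
  have hexp : ∀ ω, ‖G ω - g ω‖ ^ 2 = ‖G ω‖ ^ 2 - 2 * ⟪G ω, g ω⟫ + ‖g ω‖ ^ 2 :=
    fun ω => norm_sub_sq_real _ _
  have hpull : ∫ ω, ⟪G ω, g ω⟫ ∂P = ∫ ω, ‖G ω‖ ^ 2 ∂P := by
    rw [← integral_condExp hm]
    refine integral_congr_ae ?_
    filter_upwards [condExp_bilin_of_stronglyMeasurable_left (innerSL ℝ) hG hin hg, hunb]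
      with ω h1 h2
    rw [h2] at h1
    exact h1.trans (real_inner_self_eq_norm_sq _)
  simp_rw [hexp]
  have h1 : Integrable (fun ω => ‖G ω‖ ^ 2 - 2 * ⟪G ω, g ω⟫) P := hG2.sub (hin.const_mul 2)
  refine ⟨h1.add hg2, ?_⟩
  rw [integral_add h1 hg2, integral_sub hG2 (hin.const_mul 2), integral_const_mul, hpull]
  ring

/-- A contraction with factor `1 - 2 * b` perturbed by geometrically decaying noise: half of the
contraction pays for the noise once `κ ≤ b * w`. -/
lemma geometric_recurrence {e : ℕ → ℝ} {b κ ζ w : ℝ} (hb : 0 ≤ b) (hb1 : 2 * b ≤ 1)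
    (hζ : 0 ≤ ζ) (hw : 0 ≤ w) (hκ : κ ≤ b * w) (h1 : e 1 ≤ w)
    (hrec : ∀ k, 1 ≤ k → e (k + 1) ≤ (1 - 2 * b) * e k + κ * ζ ^ (k - 1)) :
    ∀ k, 1 ≤ k → e k ≤ w * (max (1 - b) ζ) ^ (k - 1) := by
  intro k hk
  set ρ := max (1 - b) ζ with hρ
  have hρ0 : 0 ≤ ρ := hζ.trans (le_max_right _ _)
  induction k, hk using Nat.le_induction with
  | base => simpa using h1
  | succ k hk ih =>
    obtain ⟨j, rfl⟩ := Nat.exists_eq_add_of_le' hk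
    have hr := hrec (j + 1) hk
    simp only [Nat.add_sub_cancel] at ih hr ⊢
    calc e (j + 1 + 1) ≤ (1 - 2 * b) * e (j + 1) + κ * ζ ^ j := hr
      _ ≤ (1 - 2 * b) * (w * ρ ^ j) + b * w * ρ ^ j := by
        have h2b : 0 ≤ 1 - 2 * b := by linarith
        gcongr
        exact le_max_right _ _
      _ = (1 - b) * (w * ρ ^ j) := by ring
      _ ≤ ρ * (w * ρ ^ j) := by gcongr; exact le_max_left _ _
      _ = w * ρ ^ (j + 1) := by ring

/-- PL case, geometrically decaying variance: linear convergence. -/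
theorem trish_pl_geometric_variance
    {n : ℕ} (hn : 1 ≤ n)
    (f : EuclideanSpace ℝ (Fin n) → ℝ)
    (L_g : ℝ) (hLg : 0 < L_g)
    (hf : ContDiff ℝ 2 f)
    (hlip : ∀ y z, ‖gradient f y - gradient f z‖ ≤ L_g * ‖y - z‖)
    (f_inf : ℝ) (hbdd : ∀ y, f_inf ≤ f y) (hfinf : f_inf = ⨅ y, f y)
    {Ω : Type*} {m0 : MeasurableSpace Ω} (P : Measure Ω) [IsProbabilityMeasure P]
    (ℱ : Filtration ℕ m0)
    (x g s : ℕ → Ω → EuclideanSpace ℝ (Fin n))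
    (H : ℕ → Ω → (EuclideanSpace ℝ (Fin n) →L[ℝ] EuclideanSpace ℝ (Fin n)))
    (α γ1 γ2 : ℝ) (hγ2 : 0 < γ2) (hγ12 : γ2 ≤ γ1)
    (x1 : EuclideanSpace ℝ (Fin n)) (hx1 : ∀ ω, x 1 ω = x1)
    (hx_meas : ∀ k, 1 ≤ k → StronglyMeasurable[ℱ k] (x k))
    (hg_meas : ∀ k, 1 ≤ k → StronglyMeasurable[ℱ (k+1)] (g k))
    (hs_meas : ∀ k, 1 ≤ k → StronglyMeasurable[ℱ (k+1)] (s k))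
    (hH_meas : ∀ k, 1 ≤ k → StronglyMeasurable[ℱ (k+1)] (H k))
    (hHsymm : ∀ k ω u v, ⟪H k ω u, v⟫ = ⟪u, H k ω v⟫)
    (hstep : ∀ k, 1 ≤ k → ∀ ω, x (k+1) ω = x k ω + s k ω)
    (hunbiased : ∀ k, 1 ≤ k → P[g k|ℱ k] =ᵐ[P] fun ω => gradient f (x k ω))
    (hcauchy : ∀ k, 1 ≤ k → ∀ᵐ ω ∂P,
      CauchyDecrease (g k ω) (H k ω) (radius α γ1 γ2 (g k ω)) (s k ω))
    (hint_f : ∀ k, Integrable (fun ω => f (x k ω)) P)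
    (hint_grad : ∀ k, Integrable (fun ω => ‖gradient f (x k ω)‖^2) P)
    (hint_g : ∀ k, Integrable (g k) P)
    (hint_g2 : ∀ k, Integrable (fun ω => ‖g k ω‖^2) P)
    (c : ℝ) (hc : 0 < c)
    (hPL : ∀ y, 2 * c * (f y - f_inf) ≤ ‖gradient f y‖^2)
    (M_g M_H ζ : ℝ) (hMg : 0 < M_g) (hMH : 0 < M_H) (hζ0 : 0 < ζ) (hζ1 : ζ < 1)
    (hvar : ∀ k, 1 ≤ k → ∀ᵐ ω ∂P,
      (P[(fun ω' => ‖gradient f (x k ω') - g k ω'‖^2)|ℱ k]) ω ≤ M_g * ζ^(k - 1))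
    (hHbd : ∀ k, 1 ≤ k → ∀ᵐ ω ∂P, ‖H k ω‖ ≤ M_H)
    (hα : 0 < α) (hα1 : α ≤ γ2 / (4 * γ1^2 * (L_g + M_H)))
    (hcontr : 2 * c * (γ2 / 8) * α ≤ 1) :
    ∀ k : ℕ, 1 ≤ k →
      (∫ ω, f (x k ω) ∂P) - f_inf ≤
        max (f x1 - f_inf) (((γ1^2 / γ2 - γ2 / 8) * M_g) / (c * (γ2 / 8)))
          * (max (1 - c * (γ2 / 8) * α) ζ)^(k - 1) := by
  have hγ1 : 0 < γ1 := hγ2.trans_le hγ12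
  have hfd : Differentiable ℝ f := hf.differentiable (by norm_num)
  have hgc : Continuous (gradient f) :=
    (LipschitzWith.of_dist_le_mul (K := ⟨L_g, hLg.le⟩)
      (fun y z => by rw [dist_eq_norm, dist_eq_norm]; exact hlip y z)).continuous
  have hcoef : 0 ≤ γ1 ^ 2 / γ2 - γ2 / 8 := by
    rw [sub_nonneg, le_div_iff₀ hγ2]
    nlinarith
  have hgap : 0 ≤ f x1 - f_inf := sub_nonneg.2 (hbdd x1)
  set w := max (f x1 - f_inf) (((γ1^2 / γ2 - γ2 / 8) * M_g) / (c * (γ2 / 8))) with hw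
  have hwκ : (γ1^2 / γ2 - γ2 / 8) * M_g ≤ w * (c * (γ2 / 8)) := by
    rw [← div_le_iff₀ (by positivity)]
    exact le_max_right _ _
  have h1 : (∫ ω, f (x 1 ω) ∂P) - f_inf ≤ w := by
    simp only [hx1, integral_const, probReal_univ, one_smul]
    exact le_max_left _ _
  refine geometric_recurrence (e := fun k => (∫ ω, f (x k ω) ∂P) - f_inf)
    (b := c * (γ2 / 8) * α) (κ := α * ((γ1^2 / γ2 - γ2 / 8) * M_g))
    (by positivity) (by linarith) hζ0.le (hgap.trans (le_max_left _ _))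
    (by nlinarith [mul_le_mul_of_nonneg_left hwκ hα.le]) h1 ?_
  intro k hk
  obtain ⟨hD, hdecomp⟩ := integral_sq_decomp (ℱ.le k)
    (hgc.comp_stronglyMeasurable (hx_meas k hk)) (hint_g k) (hint_grad k) (hint_g2 k)
    (hunbiased k hk)
  have hvark : ∫ ω, ‖gradient f (x k ω) - g k ω‖ ^ 2 ∂P ≤ M_g * ζ ^ (k - 1) := by
    rw [← integral_condExp (ℱ.le k)]
    simpa using integral_mono_ae integrable_condExp (integrable_const _) (hvar k hk)
  have hnoise : Integrable (fun ω => α * (γ1 ^ 2 / γ2 * ‖gradient f (x k ω) - g k ω‖ ^ 2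
      - γ2 / 8 * ‖g k ω‖ ^ 2)) P :=
    ((hD.const_mul _).sub ((hint_g2 k).const_mul _)).const_mul α
  have hstepk : ∫ ω, f (x (k + 1) ω) ∂P ≤ ∫ ω, (f (x k ω) +
      α * (γ1 ^ 2 / γ2 * ‖gradient f (x k ω) - g k ω‖ ^ 2 - γ2 / 8 * ‖g k ω‖ ^ 2)) ∂P := by
    refine integral_mono_ae (hint_f _) ((hint_f k).add hnoise) ?_
    filter_upwards [hcauchy k hk, hHbd k hk] with ω hc1 hH1
    simp only [hstep k hk ω]
    exact pathwise_decrease hLg hMH hfd hlip hγ2 hγ12 hα hα1 hH1 hc1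
  rw [integral_add (hint_f k) hnoise, integral_const_mul, integral_sub (hD.const_mul _) ((hint_g2 k).const_mul _),
    integral_const_mul, integral_const_mul, hdecomp] at hstepk
  have hPLk : 2 * c * ((∫ ω, f (x k ω) ∂P) - f_inf) ≤
      ∫ ω, ‖gradient f (x k ω)‖ ^ 2 ∂P := by
    have h := integral_mono (((hint_f k).sub (integrable_const f_inf)).const_mul (2 * c))
      (hint_grad k) (fun ω => hPL (x k ω))
    rw [integral_const_mul] at h
    simpa [integral_sub (hint_f k) (integrable_const f_inf)] using h
  have hv := mul_le_mul_of_nonneg_left hvark (mul_nonneg hα.le hcoef)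
  have hp := mul_le_mul_of_nonneg_left hPLk (by positivity : 0 ≤ α * (γ2 / 8))
  linarith
end
end

section
/- (Complexity analysis: small-multiplier case yields a small new gradient.) Let f : ℝ^n → ℝ be twice continuously differentiable with Hessian ∇²f Lipschitz continuous (in operator norm) with constant L_H > 0. Let x, g, s ∈ ℝ^n, let H be a symmetric n×n matrix, and let Δ > 0, ε > 0, and υ ∈ ℝ satisfy: g + (H + υI)s = 0, 0 ≤ υ ≤ √ε, and ‖s‖ ≤ Δ. Then ‖∇f(x + s)‖ ≤ (L_H/2)·Δ² + ‖∇f(x) − g‖ + Δ·‖∇²f(x) − H‖ + Δ·√ε. -/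
/-!
Write `G = ∇f`. Since `f` is `C²`, `G` is differentiable, and the Lipschitz bound on its derivative
gives the first-order Taylor estimate `‖G (x + s) - G x - G' x s‖ ≤ (L_H / 2) ‖s‖²`. By the
optimality condition `g + H s = -υ s`, the remaining part is
`G x + G' x s = (G x - g) + (G' x - H) s - υ s`, and the triangle inequality with `‖s‖ ≤ Δ` and
`υ ≤ √ε` concludes.
-/


open RealInnerProductSpace

noncomputable section

/-- First-order Taylor estimate for a map with Lipschitz derivative, obtained by comparing the
remainder along the segment from `x` to `x + s` with `t ↦ (L / 2) ‖s‖² t²`. -/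
lemma norm_taylor_remainder_le {E F : Type*} [NormedAddCommGroup E] [NormedSpace ℝ E]
    [NormedAddCommGroup F] [NormedSpace ℝ F] {G : E → F} (hG : Differentiable ℝ G) {L : ℝ}
    (hL : ∀ y z, ‖fderiv ℝ G y - fderiv ℝ G z‖ ≤ L * ‖y - z‖) (x s : E) :
    ‖G (x + s) - G x - fderiv ℝ G x s‖ ≤ L / 2 * ‖s‖ ^ 2 := by
  have hd : ∀ t : ℝ, HasDerivAt (fun t : ℝ => G (x + t • s) - G x - t • fderiv ℝ G x s)
      (fderiv ℝ G (x + t • s) s - fderiv ℝ G x s) t := by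
    intro t
    have h1 : HasDerivAt (fun t : ℝ => x + t • s) s t := by
      simpa using ((hasDerivAt_id t).smul_const s).const_add x
    have h2 := (hG (x + t • s)).hasFDerivAt.comp_hasDerivAt t h1
    have h3 : HasDerivAt (fun t : ℝ => t • fderiv ℝ G x s) (fderiv ℝ G x s) t := by
      simpa using (hasDerivAt_id t).smul_const (fderiv ℝ G x s)
    exact (h2.sub_const (G x)).sub h3
  have hB : ∀ t : ℝ, HasDerivAt (fun t : ℝ => L / 2 * ‖s‖ ^ 2 * t ^ 2) (L * ‖s‖ ^ 2 * t) t := by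
    intro t
    refine ((hasDerivAt_pow 2 t).const_mul (L / 2 * ‖s‖ ^ 2)).congr_deriv ?_
    push_cast
    ring
  have key := image_norm_le_of_norm_deriv_right_le_deriv_boundary (a := 0) (b := 1)
    (fun t _ => (hd t).continuousAt.continuousWithinAt)
    (fun t _ => (hd t).hasDerivWithinAt) (by simp) hB
    (fun t ht => by
      rw [← sub_apply]
      calc ‖(fderiv ℝ G (x + t • s) - fderiv ℝ G x) s‖
          ≤ ‖fderiv ℝ G (x + t • s) - fderiv ℝ G x‖ * ‖s‖ := ContinuousLinearMap.le_opNorm _ _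
        _ ≤ (L * ‖x + t • s - x‖) * ‖s‖ := by gcongr; exact hL _ _
        _ = L * ‖s‖ ^ 2 * t := by
          rw [add_sub_cancel_left, norm_smul, Real.norm_of_nonneg ht.1]; ring)
    (Set.right_mem_Icc.2 zero_le_one)
  simpa using key

/-- Complexity analysis: small-multiplier case yields a small new gradient. -/
theorem small_multiplier_small_gradient
    {n : ℕ} (hn : 1 ≤ n)
    (f : EuclideanSpace ℝ (Fin n) → ℝ)
    (hf : ContDiff ℝ 2 f)
    (L_H : ℝ) (hLH : 0 < L_H)
    (hHesslip : ∀ y z,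
      ‖fderiv ℝ (gradient f) y - fderiv ℝ (gradient f) z‖ ≤ L_H * ‖y - z‖)
    (x g s : EuclideanSpace ℝ (Fin n))
    (H : EuclideanSpace ℝ (Fin n) →L[ℝ] EuclideanSpace ℝ (Fin n))
    (hHsymm : ∀ u v, ⟪H u, v⟫ = ⟪u, H v⟫)
    (Δ ε υ : ℝ) (hΔ : 0 < Δ) (hε : 0 < ε)
    (hopt : g + H s + υ • s = 0)
    (hυ0 : 0 ≤ υ) (hυ : υ ≤ Real.sqrt ε)
    (hsΔ : ‖s‖ ≤ Δ) :
    ‖gradient f (x + s)‖ ≤ (L_H / 2) * Δ^2 + ‖gradient f x - g‖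
      + Δ * ‖fderiv ℝ (gradient f) x - H‖ + Δ * Real.sqrt ε := by
  have hG : Differentiable ℝ (gradient f) := by
    have h1 : Differentiable ℝ (fderiv ℝ f) :=
      (hf.fderiv_right (m := 1) (by norm_num)).differentiable (by norm_num)
    exact (InnerProductSpace.toDual ℝ (EuclideanSpace ℝ (Fin n))).symm.toContinuousLinearEquiv
      |>.differentiable.comp h1
  have hT := norm_taylor_remainder_le hG hHesslip x s
  have hsq : L_H / 2 * ‖s‖ ^ 2 ≤ L_H / 2 * Δ ^ 2 := by gcongr
  have hH : ‖(fderiv ℝ (gradient f) x - H) s‖ ≤ Δ * ‖fderiv ℝ (gradient f) x - H‖ := by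
    rw [mul_comm]
    exact (ContinuousLinearMap.le_opNorm _ _).trans (by gcongr)
  have hυs : ‖υ • s‖ ≤ Δ * Real.sqrt ε := by
    rw [norm_smul, Real.norm_of_nonneg hυ0, mul_comm]
    gcongr
  have hdecomp : gradient f (x + s) =
      (gradient f (x + s) - gradient f x - fderiv ℝ (gradient f) x s) + (gradient f x - g)
        + (fderiv ℝ (gradient f) x - H) s - υ • s := by
    rw [sub_apply, ← sub_eq_zero, ← hopt]
    abel
  rw [hdecomp]
  refine (norm_sub_le _ _).trans (add_le_add ((norm_add_le _ _).trans (add_le_add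
    ((norm_add_le _ _).trans (add_le_add (hT.trans hsq) le_rfl)) hH)) hυs)
end
end

section
/- (Complexity analysis: large-multiplier case yields ε^{3/2}-order decrease.) Let f : ℝ^n → ℝ be twice continuously differentiable with Hessian ∇²f Lipschitz continuous (in operator norm) with constant L_H > 0. Let x, g, s ∈ ℝ^n, let H be a symmetric n×n matrix, and let Δ > 0, ε > 0, and υ ∈ ℝ satisfy: g + (H + υI)s = 0, H + υI positive semidefinite, υ > √ε, and ‖s‖ = Δ. Then f(x + s) − f(x) ≤ −(1/2)·√ε·Δ² + Δ·‖∇f(x) − g‖ + (1/2)·Δ²·‖∇²f(x) − H‖ + (L_H/6)·Δ³. -/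
/-!
Pairing the optimality equation `g + (H + υI)s = 0` with `s` gives
`⟪g, s⟫ + ⟪s, Hs⟫ + υ‖s‖² = 0`, so the quadratic model satisfies
`⟪g, s⟫ + ½⟪s, Hs⟫ = -½(⟪s, Hs⟫ + υ‖s‖²) - ½υ‖s‖² ≤ -½√ε Δ²` by semidefiniteness and `υ > √ε`.
The Lipschitz Hessian bounds `f (x + s) - f x` by its second-order Taylor polynomial plus
`(L_H / 6)‖s‖³` (`taylor_two_le`), and replacing `∇f x`, `∇²f x` by `g`, `H` in this polynomial
costs `Δ‖∇f x - g‖ + ½Δ²‖∇²f x - H‖` by Cauchy-Schwarz.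
-/

open RealInnerProductSpace

noncomputable section

lemma nonpos_of_hasDerivAt_nonpos {h h' : ℝ → ℝ} (hd : ∀ t, HasDerivAt h (h' t) t)
    (h0 : h 0 = 0) (hn : ∀ t, 0 ≤ t → h' t ≤ 0) {t : ℝ} (ht : 0 ≤ t) : h t ≤ 0 := by
  have hanti : AntitoneOn h (Set.Ici 0) := by
    refine antitoneOn_of_deriv_nonpos (convex_Ici 0)
      (fun t _ => (hd t).continuousAt.continuousWithinAt)
      (fun t _ => (hd t).differentiableAt.differentiableWithinAt) fun t ht => ?_
    rw [(hd t).deriv]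
    exact hn t (interior_subset ht)
  exact h0 ▸ hanti Set.self_mem_Ici ht ht

/-- Second-order Taylor upper bound under a Lipschitz Hessian: along `t ↦ x + t • s` the second
derivative of the remainder minus `L‖s‖³t³/6` is nonpositive, and two integrations from `0`
preserve the sign. -/
lemma taylor_two_le {E : Type*} [NormedAddCommGroup E] [InnerProductSpace ℝ E] [CompleteSpace E]
    {f : E → ℝ} (hf : ContDiff ℝ 2 f) {L : ℝ}
    (hL : ∀ y z, ‖fderiv ℝ (gradient f) y - fderiv ℝ (gradient f) z‖ ≤ L * ‖y - z‖) (x s : E) :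
    f (x + s) - f x ≤ ⟪gradient f x, s⟫ + 1 / 2 * ⟪fderiv ℝ (gradient f) x s, s⟫
      + L / 6 * ‖s‖ ^ 3 := by
  have hfd : Differentiable ℝ f := hf.differentiable (by norm_num)
  have hgd : Differentiable ℝ (gradient f) := by
    have h1 : ContDiff ℝ 1 (fderiv ℝ f) := hf.fderiv_right (by norm_num)
    exact (InnerProductSpace.toDual ℝ E).symm.differentiable.comp
      (h1.differentiable (by norm_num))
  have hline (t : ℝ) : HasDerivAt (fun t : ℝ => x + t • s) s t := by
    simpa using ((hasDerivAt_id t).smul_const s).const_add x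
  have hφ (t : ℝ) : HasDerivAt (fun t : ℝ => f (x + t • s)) ⟪gradient f (x + t • s), s⟫ t := by
    have := (hfd (x + t • s)).hasGradientAt.hasFDerivAt.comp_hasDerivAt t (hline t)
    rwa [InnerProductSpace.toDual_apply_apply] at this
  have hψ (t : ℝ) : HasDerivAt (fun t : ℝ => ⟪gradient f (x + t • s), s⟫)
      ⟪fderiv ℝ (gradient f) (x + t • s) s, s⟫ t := by
    have := ((hgd (x + t • s)).hasFDerivAt.comp_hasDerivAt t (hline t)).inner ℝ
      (hasDerivAt_const t s)
    simpa using this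
  set a := ⟪gradient f x, s⟫ with ha
  set b := ⟪fderiv ℝ (gradient f) x s, s⟫ with hb
  have hcurv (t : ℝ) (ht : 0 ≤ t) :
      ⟪fderiv ℝ (gradient f) (x + t • s) s, s⟫ - b - L * ‖s‖ ^ 3 * t ≤ 0 := by
    have h1 : ⟪fderiv ℝ (gradient f) (x + t • s) s, s⟫ - b
        = ⟪(fderiv ℝ (gradient f) (x + t • s) - fderiv ℝ (gradient f) x) s, s⟫ := by
      simp [hb, inner_sub_left]
    have h2 := hL (x + t • s) x
    rw [add_sub_cancel_left, norm_smul, Real.norm_of_nonneg ht] at h2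
    have h3 : ⟪(fderiv ℝ (gradient f) (x + t • s) - fderiv ℝ (gradient f) x) s, s⟫
        ≤ L * (t * ‖s‖) * ‖s‖ * ‖s‖ := by
      refine (real_inner_le_norm _ _).trans ?_
      gcongr
      exact ContinuousLinearMap.le_of_opNorm_le _ h2 s
    rw [h1]
    linarith
  have hslope (t : ℝ) (ht : 0 ≤ t) :
      ⟪gradient f (x + t • s), s⟫ - a - b * t - L * ‖s‖ ^ 3 / 2 * t ^ 2 ≤ 0 := by
    refine nonpos_of_hasDerivAt_nonpos
      (h := fun t => ⟪gradient f (x + t • s), s⟫ - a - b * t - L * ‖s‖ ^ 3 / 2 * t ^ 2)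
      (fun t => ?_) (by simp [ha]) hcurv ht
    refine ((((hψ t).sub_const a).sub ((hasDerivAt_id t).const_mul b)).sub
      ((hasDerivAt_pow 2 t).const_mul (L * ‖s‖ ^ 3 / 2))).congr_deriv ?_
    norm_num
    ring
  have hval := nonpos_of_hasDerivAt_nonpos
    (h := fun t => f (x + t • s) - f x - a * t - b / 2 * t ^ 2 - L * ‖s‖ ^ 3 / 6 * t ^ 3)
    (fun t => by
      refine (((((hφ t).sub_const (f x)).sub ((hasDerivAt_id t).const_mul a)).sub
        ((hasDerivAt_pow 2 t).const_mul (b / 2))).sub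
        ((hasDerivAt_pow 3 t).const_mul (L * ‖s‖ ^ 3 / 6))).congr_deriv ?_
      norm_num
      ring) (by simp) hslope zero_le_one
  simp only [one_smul, one_pow, mul_one] at hval
  linarith

/-- Complexity analysis: large-multiplier case yields `ε^{3/2}`-order decrease. -/
theorem large_multiplier_decrease
    {n : ℕ} (hn : 1 ≤ n)
    (f : EuclideanSpace ℝ (Fin n) → ℝ)
    (hf : ContDiff ℝ 2 f)
    (L_H : ℝ) (hLH : 0 < L_H)
    (hHesslip : ∀ y z,
      ‖fderiv ℝ (gradient f) y - fderiv ℝ (gradient f) z‖ ≤ L_H * ‖y - z‖)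
    (x g s : EuclideanSpace ℝ (Fin n))
    (H : EuclideanSpace ℝ (Fin n) →L[ℝ] EuclideanSpace ℝ (Fin n))
    (hHsymm : ∀ u v, ⟪H u, v⟫ = ⟪u, H v⟫)
    (Δ ε υ : ℝ) (hΔ : 0 < Δ) (hε : 0 < ε)
    (hopt : g + H s + υ • s = 0)
    (hpsd : ∀ v : EuclideanSpace ℝ (Fin n), 0 ≤ ⟪v, H v⟫ + υ * ‖v‖^2)
    (hυ : Real.sqrt ε < υ)
    (hsΔ : ‖s‖ = Δ) :
    f (x + s) - f x ≤ -((1/2) * Real.sqrt ε * Δ^2) + Δ * ‖gradient f x - g‖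
      + (1/2) * Δ^2 * ‖fderiv ℝ (gradient f) x - H‖ + (L_H / 6) * Δ^3 := by
  have htaylor := taylor_two_le hf hHesslip x s
  have hgrad : ⟪gradient f x, s⟫ - ⟪g, s⟫ ≤ Δ * ‖gradient f x - g‖ := by
    rw [← inner_sub_left, ← hsΔ, mul_comm]
    exact real_inner_le_norm _ _
  have hhess : ⟪fderiv ℝ (gradient f) x s, s⟫ - ⟪s, H s⟫
      ≤ Δ ^ 2 * ‖fderiv ℝ (gradient f) x - H‖ := by
    rw [← real_inner_comm s (H s), ← inner_sub_left, ← _root_.sub_apply, ← hsΔ]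
    calc _ ≤ ‖(fderiv ℝ (gradient f) x - H) s‖ * ‖s‖ := real_inner_le_norm _ _
      _ ≤ ‖fderiv ℝ (gradient f) x - H‖ * ‖s‖ * ‖s‖ := by
        gcongr
        exact ContinuousLinearMap.le_opNorm _ _
      _ = _ := by ring
  have hpair : ⟪g, s⟫ + ⟪s, H s⟫ + υ * Δ ^ 2 = 0 := by
    have h := congrArg (fun v => ⟪v, s⟫) hopt
    simp only [inner_add_left, real_inner_smul_left, real_inner_self_eq_norm_sq,
      inner_zero_left, hsΔ] at h
    rwa [real_inner_comm s (H s)] at h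
  have hcurv := hpsd s
  rw [hsΔ] at hcurv htaylor
  have hmult : Real.sqrt ε * Δ ^ 2 ≤ υ * Δ ^ 2 := by gcongr
  linarith
end
end

section
/- (Sublinear decay of a recursively bounded sequence.) Let a, b, δ1, δ2 > 0 with δ1·a > 1 and δ1·a/(b + k) ≤ 1 for all integers k ≥ 1, and let (e_k)_{k≥1} be a sequence of nonnegative real numbers satisfying e_{k+1} ≤ (1 − δ1·a/(b + k))·e_k + δ2·a²/(b + k)² for all k ≥ 1. Then e_k ≤ φ/(b + k) for all k ≥ 1, where φ := max{(b + 1)·e_1, δ2·a²/(δ1·a − 1)}. -/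
/-! Write `n = b + k`, `c = δ1 * a`, `d = δ2 * a ^ 2` and let `φ` be the maximum in the bound, so that
`d ≤ (c - 1) * φ`. The proof is by induction on `k`; if `e k ≤ φ / n`, then, since `1 - c / n ≥ 0`,
`e (k + 1) ≤ (n - c) * φ / n ^ 2 + (c - 1) * φ / n ^ 2 = (n - 1) * φ / n ^ 2 ≤ φ / (n + 1)`,
the last step because `(n - 1) * (n + 1) ≤ n ^ 2`. -/

/-- Sublinear decay of a recursively bounded sequence. -/
theorem sublinear_decay_of_recursive_sequence
    (a b δ1 δ2 : ℝ) (ha : 0 < a) (hb : 0 < b) (hδ1 : 0 < δ1) (hδ2 : 0 < δ2)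
    (hδ1a : 1 < δ1 * a)
    (hsmall : ∀ k : ℕ, 1 ≤ k → δ1 * a / (b + k) ≤ 1)
    (e : ℕ → ℝ) (he : ∀ k : ℕ, 1 ≤ k → 0 ≤ e k)
    (hrec : ∀ k : ℕ, 1 ≤ k →
      e (k + 1) ≤ (1 - δ1 * a / (b + k)) * e k + δ2 * a^2 / (b + k)^2) :
    ∀ k : ℕ, 1 ≤ k →
      e k ≤ max ((b + 1) * e 1) (δ2 * a^2 / (δ1 * a - 1)) / (b + k) := by
  set φ := max ((b + 1) * e 1) (δ2 * a^2 / (δ1 * a - 1)) with hφ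
  have hc : 0 < δ1 * a - 1 := by linarith
  have hd : δ2 * a^2 ≤ φ * (δ1 * a - 1) := (div_le_iff₀ hc).1 (le_max_right _ _)
  have hφ0 : 0 ≤ φ := le_trans (by positivity) (le_max_right _ _)
  intro k hk
  induction k, hk using Nat.le_induction with
  | base =>
    rw [le_div_iff₀ (by positivity), Nat.cast_one, mul_comm]
    exact le_max_left _ _
  | succ k hk ih =>
    have hn : 0 < b + k := by positivity
    calc e (k + 1)
        ≤ (1 - δ1 * a / (b + k)) * e k + δ2 * a^2 / (b + k)^2 := hrec k hk
      _ ≤ (1 - δ1 * a / (b + k)) * (φ / (b + k)) + φ * (δ1 * a - 1) / (b + k)^2 := by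
          have := sub_nonneg.2 (hsmall k hk)
          gcongr
      _ = φ * (b + k - 1) / (b + k)^2 := by
          field_simp
          ring
      _ ≤ φ / (b + (k + 1 : ℕ)) := by
          rw [div_le_div_iff₀ (by positivity) (by positivity), Nat.cast_add_one]
          nlinarith
end

section
/- (Linear decay of a recursively bounded sequence with geometric forcing term.) Let c, κ1, κ2, α > 0 and ζ ∈ (0, 1) with 2·c·κ1·α ≤ 1, and let (e_k)_{k≥1} be a sequence of nonnegative real numbers satisfying e_{k+1} ≤ (1 − 2·c·κ1·α)·e_k + κ2·α·ζ^{k−1} for all k ≥ 1. Then e_k ≤ ω·ρ^{k−1} for all k ≥ 1, where ω := max{e_1, κ2/(c·κ1)} and ρ := max{1 − c·κ1·α, ζ}. -/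
/-!
Write `ω = max (e 1) (κ2 / (c κ1))` and `ρ = max (1 - c κ1 α) ζ`. The choice of `ω` makes the forcing
coefficient small relative to the contraction: `κ2 α ≤ c κ1 α ω`. Together with `ζ ≤ ρ`, half of the
contraction `2 c κ1 α` absorbs the forcing term, and the other half, through `1 - c κ1 α ≤ ρ`,
yields one more factor `ρ`. Induction on `k` concludes.
-/

/-- Linear decay of a recursively bounded sequence with geometric forcing. -/
theorem linear_decay_of_recursive_sequence
    (c κ1 κ2 α ζ : ℝ) (hc : 0 < c) (hκ1 : 0 < κ1) (hκ2 : 0 < κ2) (hα : 0 < α)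
    (hζ0 : 0 < ζ) (hζ1 : ζ < 1)
    (hcontr : 2 * c * κ1 * α ≤ 1)
    (e : ℕ → ℝ) (he : ∀ k : ℕ, 1 ≤ k → 0 ≤ e k)
    (hrec : ∀ k : ℕ, 1 ≤ k →
      e (k + 1) ≤ (1 - 2 * c * κ1 * α) * e k + κ2 * α * ζ^(k - 1)) :
    ∀ k : ℕ, 1 ≤ k →
      e k ≤ max (e 1) (κ2 / (c * κ1)) * (max (1 - c * κ1 * α) ζ)^(k - 1) := by
  set ω := max (e 1) (κ2 / (c * κ1)) with hω
  set ρ := max (1 - c * κ1 * α) ζ with hρ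
  have hω0 : 0 ≤ ω := (he 1 le_rfl).trans (le_max_left _ _)
  have hζρ : ζ ≤ ρ := le_max_right _ _
  have hρ0 : 0 ≤ ρ := hζ0.le.trans hζρ
  have haρ : 1 - c * κ1 * α ≤ ρ := le_max_left _ _
  have hforce : κ2 * α ≤ c * κ1 * α * ω := by
    have h : κ2 ≤ ω * (c * κ1) := (div_le_iff₀ (mul_pos hc hκ1)).1 (le_max_right _ _)
    calc κ2 * α ≤ ω * (c * κ1) * α := mul_le_mul_of_nonneg_right h hα.le
      _ = c * κ1 * α * ω := by ring
  intro k hk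
  induction k, hk using Nat.le_induction with
  | base => simp [hω]
  | succ k hk ih =>
    have hpow : ρ ^ (k + 1 - 1) = ρ * ρ ^ (k - 1) := by
      rw [← pow_succ']
      congr 1
      omega
    calc e (k + 1) ≤ (1 - 2 * c * κ1 * α) * e k + κ2 * α * ζ ^ (k - 1) := hrec k hk
      _ ≤ (1 - 2 * c * κ1 * α) * (ω * ρ ^ (k - 1)) + c * κ1 * α * ω * ρ ^ (k - 1) := by
        have h1 : 0 ≤ 1 - 2 * c * κ1 * α := by linarith
        gcongr
      _ = (1 - c * κ1 * α) * (ω * ρ ^ (k - 1)) := by ring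
      _ ≤ ρ * (ω * ρ ^ (k - 1)) := by gcongr
      _ = ω * ρ ^ (k + 1 - 1) := by rw [hpow]; ring
end
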